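/- arXiv:1905.04337 — 2 statements merged into one kernel-verified Lean document; each statement's English description precedes it below -/
import Mathlib

section
/- Suppose s'_1 ⪰ s_1 with s_1, s'_1 ∈ S^x, and couple the two trajectories on the same demand sequence. Let τ ∈ {2, …, L+1} be such that I'_t ≥ I_t for all 1 ≤ t < τ and I'_τ < I_τ. Then the dominance relation reverses at time τ: s_τ ⪰ s'_τ. -/
/-!
A sale at time `u` enters the pipeline at position `L`, and every pipeline entry then moves down by
one position per period until it arrives on hand. So for `τ ≤ L` the state at time `τ` consists of
the on-hand inventory, the initial entries `τ + 1, …, L` in the positions `1, …, L - τ`, and the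
sales of the times `0, …, τ - 1` in the positions `L - τ + 1, …, L`.

Let `k` be a switching index for `s₁' ⪰ s₁`. Up to time `k` only initial entries with `s₁ ≤ s₁'`
have arrived, and the leftover inventory `(I - d)⁺` is monotone in `I`, so `I ≤ I'` until then and a
reversal at `τ` forces `k < τ`. Hence the initial entries still in the pipeline at time `τ` are
ordered the other way, while the sales `min I d` made before `τ` were at least as large in the
primed system. This makes `L - τ` a switching index for `s_τ ⪰ s'_τ`.
-/

open Finset

/-- One step of the base-stock Markov reward process: given state `s ∈ S^x`
(on-hand inventory `s 0` and pipeline `s 1, …, s L`) and demand `z`, the next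
state is `(s 0 - min (s 0) z + s 1, s 2, …, s L, min (s 0) z)`. -/
noncomputable def mrpStep (L : ℕ) (s : Fin (L + 1) → ℝ) (z : ℝ) : Fin (L + 1) → ℝ :=
  fun i =>
    if (i : ℕ) = 0 then s 0 - min (s 0) z + s 1
    else if h : (i : ℕ) = L then min (s 0) z
    else s ⟨(i : ℕ) + 1, by have := i.isLt; omega⟩

/-- The trajectory of the Markov reward process driven by the (0-indexed) demand
sequence `d`, started at `s₁`; `mrpTraj L d s₁ t` is the state at (1-indexed) time `t+1`. -/
noncomputable def mrpTraj (L : ℕ) (d : ℕ → ℝ) (s₁ : Fin (L + 1) → ℝ) : ℕ → Fin (L + 1) → ℝ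
  | 0 => s₁
  | t + 1 => mrpStep L (mrpTraj L d s₁ t) (d t)

/-- Membership in the state space `S^x`: nonnegative entries summing to `x`. -/
def memS (L : ℕ) (x : ℝ) (s : Fin (L + 1) → ℝ) : Prop :=
  (∀ i, 0 ≤ s i) ∧ ∑ i, s i = x

/-- On-hand inventory `I` at (0-indexed) time `t`. -/
noncomputable def onHand (L : ℕ) (d : ℕ → ℝ) (s₁ : Fin (L + 1) → ℝ) (t : ℕ) : ℝ :=
  mrpTraj L d s₁ t 0

/-- Sales `y = min(I, d)` at (0-indexed) time `t`. -/
noncomputable def sales (L : ℕ) (d : ℕ → ℝ) (s₁ : Fin (L + 1) → ℝ) (t : ℕ) : ℝ :=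
  min (onHand L d s₁ t) (d t)

/-- Pseudo-cost `C = h (I - y) - p y` at (0-indexed) time `t`. -/
noncomputable def pcost (L : ℕ) (h p : ℝ) (d : ℕ → ℝ) (s₁ : Fin (L + 1) → ℝ) (t : ℕ) : ℝ :=
  h * (onHand L d s₁ t - sales L d s₁ t) - p * sales L d s₁ t

/-- The dominance relation: `succeq L s' s` means `s' ⪰ s`, i.e. with
`δ i = s' i - s i`, there is `k ∈ {0, …, L-1}` with `δ i ≥ 0` for `i ≤ k`
and `δ i ≤ 0` for `k < i`. -/
def succeq (L : ℕ) (s' s : Fin (L + 1) → ℝ) : Prop :=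
  ∃ k : ℕ, k < L ∧ (∀ i : Fin (L + 1), (i : ℕ) ≤ k → s i ≤ s' i) ∧
    ∀ i : Fin (L + 1), k < (i : ℕ) → s' i ≤ s i

section Step

variable {L : ℕ} (s : Fin (L + 1) → ℝ) (z : ℝ)

lemma mrpStep_apply_zero : mrpStep L s z 0 = s 0 - min (s 0) z + s 1 := rfl

lemma mrpStep_apply_last (hL : L ≠ 0) : mrpStep L s z (Fin.last L) = min (s 0) z := by
  simp [mrpStep, hL]

lemma mrpStep_apply_of_succ_eq {i j : Fin (L + 1)} (hi : i ≠ 0) (hij : (i : ℕ) + 1 = j) :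
    mrpStep L s z i = s j := by
  have hi0 : (i : ℕ) ≠ 0 := Fin.val_ne_zero_iff.mpr hi
  have hiL : (i : ℕ) ≠ L := by omega
  simp only [mrpStep, hi0, hiL, if_false, dite_false]
  exact congrArg s (Fin.ext hij)

end Step

section Trajectory

variable {L : ℕ} (d : ℕ → ℝ) (s : Fin (L + 1) → ℝ)

lemma mrpTraj_add_apply (u t : ℕ) {i j : Fin (L + 1)} (hi : i ≠ 0) (hij : (i : ℕ) + t = j) :
    mrpTraj L d s (u + t) i = mrpTraj L d s u j := by
  induction t generalizing i with
  | zero => exact congrArg (mrpTraj L d s u) (Fin.ext hij)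
  | succ t ih =>
    let i' : Fin (L + 1) := ⟨i + 1, by omega⟩
    calc mrpTraj L d s (u + (t + 1)) i
        = mrpTraj L d s (u + t) i' := mrpStep_apply_of_succ_eq _ _ hi rfl
      _ = mrpTraj L d s u j := ih (Fin.ne_of_val_ne (Nat.succ_ne_zero i)) (by grind)

lemma mrpTraj_apply_eq_initial (t : ℕ) {i j : Fin (L + 1)} (hi : i ≠ 0)
    (hij : (i : ℕ) + t = j) : mrpTraj L d s t i = s j := by
  simpa only [Nat.zero_add, mrpTraj] using mrpTraj_add_apply d s 0 t hi hij

lemma mrpTraj_apply_eq_sales (u t : ℕ) {i : Fin (L + 1)} (hi : i ≠ 0) (hit : (i : ℕ) + t = L) :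
    mrpTraj L d s (u + 1 + t) i = sales L d s u := by
  have hL : L ≠ 0 := by have := Fin.val_ne_zero_iff.mpr hi; omega
  exact (mrpTraj_add_apply d s (u + 1) t (j := Fin.last L) hi hit).trans
    (mrpStep_apply_last _ _ hL)

lemma onHand_sub_sales (t : ℕ) :
    onHand L d s t - sales L d s t = (onHand L d s t - d t)⁺ := by
  rw [sales, inf_eq_sub_posPart_sub, sub_sub_cancel]

lemma onHand_succ {t : ℕ} {j : Fin (L + 1)} (hj : t + 1 = (j : ℕ)) :
    onHand L d s (t + 1) = (onHand L d s t - d t)⁺ + s j := by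
  have hval : ((1 : Fin (L + 1)) : ℕ) = 1 := by
    rw [Fin.val_one', Nat.mod_eq_of_lt (by omega)]
  have hone : (1 : Fin (L + 1)) ≠ 0 := Fin.ne_of_val_ne (hval.trans_ne one_ne_zero)
  have harrival : mrpTraj L d s t 1 = s j :=
    mrpTraj_apply_eq_initial d s t hone (by omega)
  rw [← onHand_sub_sales, ← harrival]
  exact mrpStep_apply_zero _ _

variable {d s} {s' : Fin (L + 1) → ℝ}

lemma sales_le_sales_of_onHand_le {t : ℕ} (h : onHand L d s t ≤ onHand L d s' t) :
    sales L d s t ≤ sales L d s' t :=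
  min_le_min_right (d t) h

lemma onHand_le_onHand_of_forall_le {t : ℕ} (ht : t ≤ L)
    (h : ∀ i : Fin (L + 1), (i : ℕ) ≤ t → s i ≤ s' i) :
    onHand L d s t ≤ onHand L d s' t := by
  induction t with
  | zero => exact h 0 le_rfl
  | succ t ih =>
    have hprev : onHand L d s t ≤ onHand L d s' t :=
      ih (by omega) fun i hi => h i (by omega)
    let j : Fin (L + 1) := ⟨t + 1, by omega⟩
    rw [onHand_succ d s (j := j) rfl, onHand_succ d s' (j := j) rfl]
    exact add_le_add (posPart_mono (sub_le_sub_right hprev (d t))) (h j le_rfl)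

end Trajectory

theorem dominance_reversal_general {L : ℕ} {d : ℕ → ℝ} {s₁ s₁' : Fin (L + 1) → ℝ}
    (hdom : succeq L s₁' s₁) {τ : ℕ} (hτ : τ ≤ L)
    (hbefore : ∀ t, t < τ → onHand L d s₁ t ≤ onHand L d s₁' t)
    (hat : onHand L d s₁' τ < onHand L d s₁ τ) :
    succeq L (mrpTraj L d s₁ τ) (mrpTraj L d s₁' τ) := by
  obtain ⟨k, -, hle_k, hgt_k⟩ := hdom
  have hkτ : k < τ := by
    by_contra! hτk
    exact hat.not_ge (onHand_le_onHand_of_forall_le hτ fun i hi => hle_k i (hi.trans hτk))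
  refine ⟨L - τ, by omega, fun i hi => ?_, fun i hi => ?_⟩
  · rcases eq_or_ne i 0 with rfl | hi0
    · exact hat.le
    · let j : Fin (L + 1) := ⟨i + τ, by omega⟩
      rw [mrpTraj_apply_eq_initial d s₁ τ (j := j) hi0 rfl,
        mrpTraj_apply_eq_initial d s₁' τ (j := j) hi0 rfl]
      exact hgt_k j (Nat.lt_add_left i hkτ)
  · have hi0 : i ≠ 0 := Fin.ne_of_val_ne (Nat.ne_zero_of_lt hi)
    obtain ⟨t, hit⟩ : ∃ t, (i : ℕ) + t = L := ⟨L - i, by omega⟩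
    obtain ⟨u, rfl⟩ : ∃ u, τ = u + 1 + t := ⟨τ - 1 - t, by omega⟩
    rw [mrpTraj_apply_eq_sales d s₁ u t hi0 hit, mrpTraj_apply_eq_sales d s₁' u t hi0 hit]
    exact sales_le_sales_of_onHand_le (hbefore u (by omega))

/-- if `s₁' ⪰ s₁` and `τ` (0-indexed, `1 ≤ τ ≤ L`, i.e. 1-indexed
`2 ≤ τ ≤ L+1`) is a time where on-hand dominance first reverses (`I'_t ≥ I_t`
for all `t < τ` and `I'_τ < I_τ`), then the dominance reverses: `s_τ ⪰ s'_τ`. -/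
theorem dominance_reversal (L : ℕ) (hL : 1 ≤ L) (x : ℝ) (hx : 0 ≤ x)
    (d : ℕ → ℝ) (hd : ∀ t, 0 ≤ d t)
    (s₁ s₁' : Fin (L + 1) → ℝ) (hs₁ : memS L x s₁) (hs₁' : memS L x s₁')
    (hdom : succeq L s₁' s₁) (τ : ℕ) (hτ1 : 1 ≤ τ) (hτ2 : τ ≤ L)
    (hbefore : ∀ t, t < τ → onHand L d s₁ t ≤ onHand L d s₁' t)
    (hat : onHand L d s₁' τ < onHand L d s₁ τ) :
    succeq L (mrpTraj L d s₁ τ) (mrpTraj L d s₁' τ) :=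
  dominance_reversal_general hdom hτ2 hbefore hat
end

section
/- Fix δ ≥ 0 and run two trajectories coupled on the same demand sequence: one from s^1_1 := (x+δ, 0, …, 0) ∈ S^{x+δ} and one from s^2_1 := (x, 0, …, 0) ∈ S^x. Then for every t ≥ 1: (i) s^1_t(i) ≥ s^2_t(i) for every coordinate i ∈ {0, …, L}; (ii) 0 ≤ I^1_t − I^2_t ≤ δ and 0 ≤ y^1_t − y^2_t ≤ δ; and (iii) the pseudo-costs satisfy |C^1_t − C^2_t| ≤ max(h,p)·δ. -/
/-!
Both the sales `min I z` and the leftover inventory `I - min I z` are nondecreasing in the on-hand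
inventory `I`, so one step of the process is monotone for the coordinatewise order and ordered
trajectories stay ordered. A step only moves units between coordinates, so the gaps between the two
trajectories are nonnegative with constant sum, which therefore bounds the on-hand gap. The on-hand
gap splits as `u + v`, where `u` is the gap in leftover inventory and `v` the gap in sales, both
nonnegative; the pseudo-costs differ by `h * u - p * v`.
-/

open Finset

/-- The base-stock starting state `(z, 0, …, 0)`. -/
noncomputable def baseState (L : ℕ) (z : ℝ) : Fin (L + 1) → ℝ :=
  fun i => if (i : ℕ) = 0 then z else 0

lemma monotone_sub_inf {G : Type*} [AddCommGroup G] [Lattice G] [IsOrderedAddMonoid G] (z : G) :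
    Monotone fun a : G => a - a ⊓ z := by
  intro a b hab
  simp only [inf_eq_sub_posPart_sub, sub_sub_cancel]
  exact posPart_mono (sub_le_sub_right hab z)

lemma abs_mul_sub_mul_le_max_abs_mul {R : Type*} [Ring R] [LinearOrder R] [IsStrictOrderedRing R]
    (a b : R) {u v : R} (hu : 0 ≤ u) (hv : 0 ≤ v) :
    |a * u - b * v| ≤ max |a| |b| * (u + v) :=
  calc |a * u - b * v| ≤ |a * u| + |b * v| := abs_sub _ _
    _ = |a| * u + |b| * v := by rw [abs_mul, abs_mul, abs_of_nonneg hu, abs_of_nonneg hv]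
    _ ≤ max |a| |b| * u + max |a| |b| * v := by
        gcongr
        exacts [le_max_left _ _, le_max_right _ _]
    _ = max |a| |b| * (u + v) := (mul_add _ _ _).symm

section Step

variable {L : ℕ} (z : ℝ)

lemma mrpStep_zero (s : Fin (L + 1) → ℝ) : mrpStep L s z 0 = s 0 - min (s 0) z + s 1 := by
  simp [mrpStep]

lemma mrpStep_last (hL : L ≠ 0) (s : Fin (L + 1) → ℝ) :
    mrpStep L s z (Fin.last L) = min (s 0) z := by
  simp [mrpStep, hL]

lemma mrpStep_succ_castSucc (s : Fin (L + 2) → ℝ) (j : Fin L) :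
    mrpStep (L + 1) s z j.castSucc.succ = s j.succ.succ := by
  simp [mrpStep, j.isLt.ne, Fin.succ]

lemma monotone_mrpStep : Monotone fun s : Fin (L + 1) → ℝ => mrpStep L s z := by
  intro s s' hs i
  dsimp only [mrpStep]
  split_ifs
  · exact add_le_add (monotone_sub_inf z (hs 0)) (hs 1)
  · exact min_le_min_right z (hs 0)
  · exact hs _

lemma sum_mrpStep (hL : L ≠ 0) (s : Fin (L + 1) → ℝ) :
    ∑ i, mrpStep L s z i = ∑ i, s i := by
  obtain ⟨m, rfl⟩ := Nat.exists_eq_succ_of_ne_zero hL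
  calc ∑ i, mrpStep (m + 1) s z i
      = (s 0 - min (s 0) z + s 1) + (∑ j : Fin m, s j.succ.succ + min (s 0) z) := by
        rw [Fin.sum_univ_succ, Fin.sum_univ_castSucc, Fin.succ_last, mrpStep_zero,
          mrpStep_last z hL]
        simp only [mrpStep_succ_castSucc]
    _ = s 0 + (s 1 + ∑ j : Fin m, s j.succ.succ) := by ring
    _ = ∑ i, s i := by rw [Fin.sum_univ_succ s, Fin.sum_univ_succ, Fin.succ_zero_eq_one]

end Step

section Trajectory

variable {L : ℕ} (d : ℕ → ℝ) (t : ℕ)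

lemma monotone_mrpTraj : Monotone fun s : Fin (L + 1) → ℝ => mrpTraj L d s t := by
  intro s s' hs
  induction t with
  | zero => exact hs
  | succ t ih => exact monotone_mrpStep (d t) ih

lemma sum_mrpTraj (hL : L ≠ 0) (s : Fin (L + 1) → ℝ) :
    ∑ i, mrpTraj L d s t i = ∑ i, s i := by
  induction t with
  | zero => rfl
  | succ t ih => exact (sum_mrpStep (d t) hL _).trans ih

lemma monotone_onHand : Monotone fun s : Fin (L + 1) → ℝ => onHand L d s t :=
  fun _ _ hs => monotone_mrpTraj d t hs 0

lemma monotone_sales : Monotone fun s : Fin (L + 1) → ℝ => sales L d s t :=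
  fun _ _ hs => min_le_min_right (d t) (monotone_onHand d t hs)

lemma monotone_onHand_sub_sales :
    Monotone fun s : Fin (L + 1) → ℝ => onHand L d s t - sales L d s t :=
  fun _ _ hs => monotone_sub_inf (d t) (monotone_onHand d t hs)

variable {s s' : Fin (L + 1) → ℝ}

lemma onHand_sub_onHand_le_sum_sub_sum (hL : L ≠ 0) (hs : s ≤ s') :
    onHand L d s' t - onHand L d s t ≤ ∑ i, s' i - ∑ i, s i :=
  calc onHand L d s' t - onHand L d s t
      ≤ ∑ i, (mrpTraj L d s' t i - mrpTraj L d s t i) :=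
        single_le_sum (f := fun i => mrpTraj L d s' t i - mrpTraj L d s t i)
          (fun i _ => sub_nonneg.2 (monotone_mrpTraj d t hs i)) (mem_univ 0)
    _ = ∑ i, s' i - ∑ i, s i := by
        rw [sum_sub_distrib, sum_mrpTraj d t hL, sum_mrpTraj d t hL]

lemma sales_sub_sales_le_onHand_sub_onHand (hs : s ≤ s') :
    sales L d s' t - sales L d s t ≤ onHand L d s' t - onHand L d s t := by
  linarith [monotone_onHand_sub_sales d t hs]

lemma abs_pcost_sub_pcost_le (h p : ℝ) (hs : s ≤ s') :
    |pcost L h p d s' t - pcost L h p d s t|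
      ≤ max |h| |p| * (onHand L d s' t - onHand L d s t) := by
  set u := (onHand L d s' t - sales L d s' t) - (onHand L d s t - sales L d s t) with hu
  set v := sales L d s' t - sales L d s t with hv
  have hu_nonneg : 0 ≤ u := sub_nonneg.2 (monotone_onHand_sub_sales d t hs)
  have hv_nonneg : 0 ≤ v := sub_nonneg.2 (monotone_sales d t hs)
  calc |pcost L h p d s' t - pcost L h p d s t|
      = |h * u - p * v| := by simp only [pcost, hu, hv]; ring_nf
    _ ≤ max |h| |p| * (u + v) := abs_mul_sub_mul_le_max_abs_mul h p hu_nonneg hv_nonneg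
    _ = max |h| |p| * (onHand L d s' t - onHand L d s t) := by rw [hu, hv]; ring

end Trajectory

lemma monotone_baseState (L : ℕ) : Monotone (baseState L) := by
  intro x y hxy i
  dsimp only [baseState]
  split_ifs
  exacts [hxy, le_rfl]

lemma sum_baseState (L : ℕ) (z : ℝ) : ∑ i, baseState L z i = z := by
  simp [baseState]

theorem base_stock_coupling_general {L : ℕ} (hL : L ≠ 0) (h p : ℝ) {δ : ℝ}
    {s s' : Fin (L + 1) → ℝ} (hs : s ≤ s') (hsum : ∑ i, s' i - ∑ i, s i ≤ δ)
    (d : ℕ → ℝ) (t : ℕ) :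
    (∀ i, mrpTraj L d s t i ≤ mrpTraj L d s' t i) ∧
    (0 ≤ onHand L d s' t - onHand L d s t ∧ onHand L d s' t - onHand L d s t ≤ δ) ∧
    (0 ≤ sales L d s' t - sales L d s t ∧ sales L d s' t - sales L d s t ≤ δ) ∧
    |pcost L h p d s' t - pcost L h p d s t| ≤ max |h| |p| * δ := by
  have onHand_gap_le : onHand L d s' t - onHand L d s t ≤ δ :=
    (onHand_sub_onHand_le_sum_sub_sum d t hL hs).trans hsum
  refine ⟨monotone_mrpTraj d t hs, ⟨sub_nonneg.2 (monotone_onHand d t hs), onHand_gap_le⟩,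
    ⟨sub_nonneg.2 (monotone_sales d t hs),
      (sales_sub_sales_le_onHand_sub_onHand d t hs).trans onHand_gap_le⟩, ?_⟩
  calc |pcost L h p d s' t - pcost L h p d s t|
      ≤ max |h| |p| * (onHand L d s' t - onHand L d s t) := abs_pcost_sub_pcost_le d t h p hs
    _ ≤ max |h| |p| * δ := by gcongr

/-- coupling the trajectories started from `(x+δ, 0, …, 0)` and
`(x, 0, …, 0)` on the same demand sequence, at every time the first trajectory
dominates coordinatewise, the gaps in on-hand inventory and in sales lie in
`[0, δ]`, and the pseudo-costs differ by at most `max(h,p) δ`. -/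
theorem base_stock_coupling (L : ℕ) (hL : 1 ≤ L)
    (h p : ℝ) (h0 : 0 ≤ h) (p0 : 0 ≤ p)
    (x δ : ℝ) (hx : 0 ≤ x) (hδ : 0 ≤ δ)
    (d : ℕ → ℝ) (hd : ∀ t, 0 ≤ d t) (t : ℕ) :
    (∀ i : Fin (L + 1),
      mrpTraj L d (baseState L x) t i ≤ mrpTraj L d (baseState L (x + δ)) t i) ∧
    (0 ≤ onHand L d (baseState L (x + δ)) t - onHand L d (baseState L x) t ∧
      onHand L d (baseState L (x + δ)) t - onHand L d (baseState L x) t ≤ δ) ∧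
    (0 ≤ sales L d (baseState L (x + δ)) t - sales L d (baseState L x) t ∧
      sales L d (baseState L (x + δ)) t - sales L d (baseState L x) t ≤ δ) ∧
    |pcost L h p d (baseState L (x + δ)) t - pcost L h p d (baseState L x) t|
      ≤ max h p * δ := by
  simpa only [abs_of_nonneg h0, abs_of_nonneg p0] using
    base_stock_coupling_general (Nat.one_le_iff_ne_zero.1 hL) h p
      (monotone_baseState L (le_add_of_nonneg_right hδ)) (by simp [sum_baseState]) d t
end
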